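/- The centralizer of the infinite Chacon transformation T is reduced to the powers of T: if S is a Lebesgue-measure-preserving transformation of X = ℝ₊ commuting with T, then there exists k ∈ ℤ such that S = T^k (μ-almost everywhere). -/

import Mathlib

open MeasureTheory Set
open scoped ENNReal NNReal Classical

noncomputable section

/-- Heights of the towers of the infinite Chacon transformation
(tower `0` is `[0,1)` with a single level, so `chaconH 1 = 8`). -/
def chaconH : ℕ → ℕ
  | 0 => 1
  | n + 1 => 2 * (3 * chaconH n + 1)

/-- Left endpoint of level `k` of tower `n`.  At step `n+1`, tower `n` (which fills
`[0, hₙ·3⁻ⁿ)`) is cut into three subcolumns of equal width; one spacer is added above the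
middle subcolumn and `3hₙ+1` spacers above the third one, the spacers being taken
successively as the leftmost intervals of length `3⁻⁽ⁿ⁺¹⁾` in the unused part of `ℝ₊`;
then the three subcolumns are stacked left under right. -/
def chaconL : ℕ → ℕ → ℝ
  | 0, _ => 0
  | n + 1, k =>
      if k < chaconH n then chaconL n k
      else if k < 2 * chaconH n then chaconL n (k - chaconH n) + (3 : ℝ)⁻¹ ^ (n + 1)
      else if k = 2 * chaconH n then (chaconH n : ℝ) * (3 : ℝ)⁻¹ ^ n
      else if k ≤ 3 * chaconH n then
        chaconL n (k - 2 * chaconH n - 1) + 2 * (3 : ℝ)⁻¹ ^ (n + 1)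
      else (chaconH n : ℝ) * (3 : ℝ)⁻¹ ^ n
        + ((k : ℝ) - 3 * (chaconH n : ℝ)) * (3 : ℝ)⁻¹ ^ (n + 1)

/-- Level `k` of tower `n`: an interval of length `3⁻ⁿ`, closed to the left and open to
the right. -/
def chaconLevel (n k : ℕ) : Set ℝ := Ico (chaconL n k) (chaconL n k + (3 : ℝ)⁻¹ ^ n)

/-- The Chacon transformation on `ℝ`: each point of a non-top level of some tower is sent
to the point directly above it (the value does not depend on the choice of the tower). -/
def chaconT0 (x : ℝ) : ℝ :=
  if h : ∃ p : ℕ × ℕ, p.2 + 1 < chaconH p.1 ∧ x ∈ chaconLevel p.1 p.2 then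
    x - chaconL h.choose.1 h.choose.2 + chaconL h.choose.1 (h.choose.2 + 1)
  else x

/-- The inverse of the Chacon transformation on `ℝ`. -/
def chaconT0inv (x : ℝ) : ℝ :=
  if h : ∃ p : ℕ × ℕ, p.2 + 1 < chaconH p.1 ∧ x ∈ chaconLevel p.1 (p.2 + 1) then
    x - chaconL h.choose.1 (h.choose.2 + 1) + chaconL h.choose.1 h.choose.2
  else x

/-- The space `X = ℝ₊`. -/
abbrev ChaconX : Type := ↥(Set.Ici (0 : ℝ))

/-- The infinite Chacon transformation `T` on `X = ℝ₊`. -/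
def chaconT (x : ChaconX) : ChaconX :=
  ⟨max 0 (chaconT0 (x : ℝ)), Set.mem_Ici.mpr (le_max_left 0 _)⟩

/-- The inverse `T⁻¹` of the Chacon transformation on `X = ℝ₊`. -/
def chaconTinv (x : ChaconX) : ChaconX :=
  ⟨max 0 (chaconT0inv (x : ℝ)), Set.mem_Ici.mpr (le_max_left 0 _)⟩

/-- Integer powers `T^j` of the Chacon transformation. -/
def chaconTZ (j : ℤ) : ChaconX → ChaconX :=
  if 0 ≤ j then chaconT^[j.toNat] else chaconTinv^[(-j).toNat]

/-- Lebesgue measure `μ` on `X = ℝ₊`. -/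
def chaconMu : Measure ChaconX := volume.comap Subtype.val

/-- `C n`: the bottom half of tower `n` (its lowest `hₙ/2` levels), as a subset of `X`. -/
def chaconC (n : ℕ) : Set ChaconX :=
  {x | ∃ k, k < chaconH n / 2 ∧ (x : ℝ) ∈ chaconLevel n k}

/-- `tₙ x ∈ {1,2,3}`: the subcolumn of tower `n` containing `x`
(junk value `0` if `x` is not in tower `n`). -/
def chaconTn (n : ℕ) (x : ChaconX) : ℕ :=
  if h : ∃ k, k < chaconH n ∧ (x : ℝ) ∈ chaconLevel n k then
    1 + (⌊((x : ℝ) - chaconL n h.choose) * (3 : ℝ) ^ (n + 1)⌋).toNat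
  else 0

/-- The Cartesian power `T^{×ι}` of the Chacon transformation, acting coordinatewise. -/
def chaconTd (ι : Type) (x : ι → ChaconX) : ι → ChaconX := fun i => chaconT (x i)

/-- Integer powers `(T^{×ι})^j`, acting coordinatewise. -/
def chaconTdZ (ι : Type) (j : ℤ) (x : ι → ChaconX) : ι → ChaconX := fun i => chaconTZ j (x i)

/-- `Cₙ^ι ⊆ X^ι`. -/
def chaconCd (ι : Type) (n : ℕ) : Set (ι → ChaconX) := {x | ∀ i, x i ∈ chaconC n}

/-- An `n`-box: a Cartesian product of levels of `C n`. -/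
def IsNBox (ι : Type) (n : ℕ) (B : Set (ι → ChaconX)) : Prop :=
  ∃ k : ι → ℕ, (∀ i, k i < chaconH n / 2) ∧
    B = {x : ι → ChaconX | ∀ i, ((x i : ℝ)) ∈ chaconLevel n (k i)}

/-- An `n`-diagonal: a maximal finite family of `n`-boxes `B, T^{×d}B, …, (T^{×d})^ℓ B`,
regarded as the union of its boxes. -/
def IsNDiagonal (ι : Type) (n : ℕ) (D : Set (ι → ChaconX)) : Prop :=
  ∃ (B : Set (ι → ChaconX)) (ℓ : ℕ),
    (∀ j : ℕ, j ≤ ℓ → IsNBox ι n (chaconTdZ ι (j : ℤ) '' B)) ∧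
    ¬ chaconTdZ ι (-1) '' B ⊆ chaconCd ι n ∧
    ¬ chaconTdZ ι ((ℓ : ℤ) + 1) '' B ⊆ chaconCd ι n ∧
    D = ⋃ j ∈ Finset.range (ℓ + 1), chaconTdZ ι (j : ℤ) '' B

/-- A measure is boundedly finite if bounded (measurable) sets have finite measure. -/
def BoundedlyFinite {α : Type*} [MeasurableSpace α] [PseudoMetricSpace α]
    (σ : Measure α) : Prop :=
  ∀ A : Set α, MeasurableSet A → Bornology.IsBounded A → σ A < ⊤

/-- Diagonal measures on `X^ι`: boundedly finite, `T^{×ι}`-invariant measures which are,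
for every large enough `n`, concentrated on a single `n`-diagonal inside `Cₙ^ι`. -/
def IsDiagonalMeasure (ι : Type) [Fintype ι] (σ : Measure (ι → ChaconX)) : Prop :=
  BoundedlyFinite σ ∧ σ.map (chaconTd ι) = σ ∧
    ∃ n₀ : ℕ, 1 ≤ n₀ ∧ ∀ n, n₀ ≤ n →
      ∃ D : Set (ι → ChaconX), IsNDiagonal ι n D ∧ σ (chaconCd ι n \ D) = 0

/-- A wandering set for the `ℤ`-action `Uz`. -/
def ZWandering {α : Type*} (Uz : ℤ → α → α) (W : Set α) : Prop :=
  ∀ j k : ℤ, j ≠ k → Disjoint (Uz j '' W) (Uz k '' W)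

/-- Conservativity: every measurable wandering set is null. -/
def ZConservative {α : Type*} [MeasurableSpace α] (σ : Measure α) (Uz : ℤ → α → α) : Prop :=
  ∀ W : Set α, MeasurableSet W → ZWandering Uz W → σ W = 0

/-- Total dissipativity: mod `σ`, the space is the disjoint union of the iterates of a
wandering set. -/
def ZTotallyDissipative {α : Type*} [MeasurableSpace α] (σ : Measure α)
    (Uz : ℤ → α → α) : Prop :=
  ∃ W : Set α, MeasurableSet W ∧ ZWandering Uz W ∧ σ ((⋃ j : ℤ, Uz j '' W)ᶜ) = 0

/-- Ergodicity of a (not necessarily finite) invariant measure: every invariant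
measurable set is null or conull. -/
def MeasErgodic {α : Type*} [MeasurableSpace α] (σ : Measure α) (U : α → α) : Prop :=
  ∀ A : Set α, MeasurableSet A → U ⁻¹' A = A → σ A = 0 ∨ σ Aᶜ = 0

/-- `Icc a b` is an `n`-crossing for `x`: a maximal finite set of consecutive integers `j`
with `(T^{×ι})^j x ∈ Cₙ^ι`. -/
def IsCrossing (ι : Type) (n : ℕ) (x : ι → ChaconX) (a b : ℤ) : Prop :=
  a ≤ b ∧ (∀ j : ℤ, a ≤ j → j ≤ b → chaconTdZ ι j x ∈ chaconCd ι n) ∧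
    chaconTdZ ι (a - 1) x ∉ chaconCd ι n ∧ chaconTdZ ι (b + 1) x ∉ chaconCd ι n

/-- `n(x)`: the smallest `n ≥ 1` with `x ∈ Cₙ^ι`. -/
def chaconNOf (ι : Type) (x : ι → ChaconX) : ℕ :=
  if h : ∃ n : ℕ, 1 ≤ n ∧ x ∈ chaconCd ι n then Nat.find h else 0

/-- `B(τ)`: the points of `B` whose coordinate `i` lies in subcolumn `τ i` of tower `n`. -/
def chaconBoxTau (ι : Type) (n : ℕ) (B : Set (ι → ChaconX)) (τ : ι → ℕ) :
    Set (ι → ChaconX) :=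
  {x ∈ B | ∀ i, chaconTn n (x i) = τ i}

/-- The transition from the `n`-diagonal `D` to the `(n+1)`-diagonal `D'` is the central
one, i.e. `D' = D(1,…,1)`. -/
def CentralTransition (ι : Type) (n : ℕ) (D D' : Set (ι → ChaconX)) : Prop :=
  ∀ B : Set (ι → ChaconX), IsNBox ι n B → B ⊆ D →
    chaconBoxTau ι n B (fun _ => 1) ⊆ D'

/-- The `n`-diagonal containing a given set (junk value `∅` if there is none). -/
def diagOfBox (ι : Type) (n : ℕ) (B : Set (ι → ChaconX)) : Set (ι → ChaconX) :=
  if h : ∃ D, IsNDiagonal ι n D ∧ B ⊆ D then h.choose else ∅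

/-- `D(τ)`: the `(n+1)`-diagonal containing `B(τ)` for an `n`-box `B ⊆ D`. -/
def diagTau (ι : Type) (n : ℕ) (D : Set (ι → ChaconX)) (τ : ι → ℕ) : Set (ι → ChaconX) :=
  if h : ∃ B, IsNBox ι n B ∧ B ⊆ D then diagOfBox ι (n + 1) (chaconBoxTau ι n h.choose τ)
  else ∅

/-- A consistent family of diagonals `(Dₙ)_{n ≥ n₀}`. -/
def IsConsistentFamily (ι : Type) (n₀ : ℕ) (D : ℕ → Set (ι → ChaconX)) : Prop :=
  (∀ n, n₀ ≤ n → IsNDiagonal ι n (D n)) ∧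
    (chaconCd ι (n₀ - 1) ∩ ⋂ n, ⋂ (_ : n₀ ≤ n), D n).Nonempty ∧
    ∀ n, n₀ ≤ n → D (n + 1) ∩ chaconCd ι n ⊆ D n

/-- `x` is seen by the family of diagonals `(Dₙ)_{n ≥ n₀}`. -/
def SeenByFam (ι : Type) (n₀ : ℕ) (D : ℕ → Set (ι → ChaconX)) (x : ι → ChaconX) : Prop :=
  ∀ n, n₀ ≤ n → x ∉ chaconCd ι n ∨ x ∈ D n

/-- Graph joinings arising from powers of `T`:
`σ(A₁ × ⋯ × A_d) = α μ(T^{-k₁}A₁ ∩ ⋯ ∩ T^{-k_d}A_d)` for some `0 < α < ∞`. -/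
def IsGraphJoining (ι : Type) [Fintype ι] (σ : Measure (ι → ChaconX)) : Prop :=
  ∃ (α : ℝ≥0∞) (k : ι → ℤ), 0 < α ∧ α ≠ ⊤ ∧
    ∀ A : ι → Set ChaconX, (∀ i, MeasurableSet (A i)) →
      σ (Set.univ.pi A) = α * chaconMu (⋂ i, chaconTZ (k i) ⁻¹' A i)

/-- Ergodic components of `σ`: the nonzero boundedly finite `T^{×ι}`-invariant ergodic
measures, absolutely continuous with respect to `σ`, which appear in its ergodic
decomposition. -/
def IsErgodicComponent (ι : Type) [Fintype ι] (σ ρ : Measure (ι → ChaconX)) : Prop :=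
  ρ ≠ 0 ∧ BoundedlyFinite ρ ∧ ρ.map (chaconTd ι) = ρ ∧ MeasErgodic ρ (chaconTd ι) ∧ ρ ≪ σ

end

/-!
The column of tower `n` through a point is determined by the residue of the point modulo `3⁻ⁿ`, so
moving a point to another level of its column amounts to a rotation of a circle `ℝ / Nℤ` by a
multiple of `3⁻ⁿ`. A `T`-invariant set is therefore invariant under rotations of arbitrarily large
finite order, and `T` is ergodic.

Let `S` commute with `T`. If `x` and `z` lie in a common column of tower `n + 1` and, together with
their images under `S`, in the bottom half of tower `n`, then `S` preserves the time `T` takes from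
`x` to `z`, hence also the order of the subcolumns of tower `n` containing these points. When `x` is
such a point and its column has one in each of the three subcolumns, `S` induces a strictly
increasing self-map of a three-element set, that is, the identity, and so `S x` is in the same
subcolumn as `x`.

A maximal inequality for the rotations by multiples of `3⁻ⁿ` shows that, for some `m`, this happens
simultaneously for all `n ≥ m` on a set of positive measure. On this set `S x` and `x` lie on a
common orbit, with finitely many possible displacements for given `m`, so some relation
`T^a (S x) = T^b x` holds on a set of positive measure. This set is `T`-invariant, hence conull.
-/

theorem chaconH_pos (n : ℕ) : 0 < chaconH n := by
  cases n <;> simp [chaconH]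

theorem two_pow_mul_three_pow_le_chaconH (n : ℕ) : 2 ^ n * 3 ^ n ≤ chaconH n := by
  induction n with
  | zero => simp [chaconH]
  | succ n ih => rw [chaconH, pow_succ, pow_succ]; linarith

/-- The index, in tower `n + 1`, of the bottom level of subcolumn `t` of tower `n`. -/
def subcolumnOffset (n : ℕ) : Fin 3 → ℕ := ![0, chaconH n, 2 * chaconH n + 1]

theorem subcolumnOffset_add_lt {n k : ℕ} (t : Fin 3) (hk : k < chaconH n) :
    subcolumnOffset n t + k < 3 * chaconH n + 1 := by
  fin_cases t <;> simp [subcolumnOffset] <;> omega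

theorem subcolumnOffset_add_chaconH_le {n : ℕ} {s t : Fin 3} (hst : s < t) :
    subcolumnOffset n s + chaconH n ≤ subcolumnOffset n t := by
  fin_cases s <;> fin_cases t <;> simp [subcolumnOffset] at hst ⊢ <;> omega

theorem subcolumnOffset_mono (n : ℕ) : Monotone (subcolumnOffset n) :=
  StrictMono.monotone fun _ _ hst =>
    (Nat.lt_add_of_pos_right (chaconH_pos n)).trans_le (subcolumnOffset_add_chaconH_le hst)

/-- The rank from the left of level `k` of tower `n` among the intervals of length `3⁻ⁿ`, so that
level `k` starts at `levelPos n k / 3 ^ n`. -/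
def levelPos : ℕ → ℕ → ℕ
  | 0, _ => 0
  | n + 1, k =>
      if k < chaconH n then 3 * levelPos n k
      else if k < 2 * chaconH n then 3 * levelPos n (k - chaconH n) + 1
      else if k = 2 * chaconH n then 3 * chaconH n
      else if k ≤ 3 * chaconH n then 3 * levelPos n (k - 2 * chaconH n - 1) + 2
      else k

theorem chaconL_eq_levelPos_div (n k : ℕ) : chaconL n k = levelPos n k / 3 ^ n := by
  induction n generalizing k with
  | zero => simp [chaconL, levelPos]
  | succ n ih =>
    unfold chaconL levelPos
    split_ifs <;> (try rw [ih]) <;> push_cast <;> simp only [inv_pow, pow_succ] <;> field_simp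
    ring

theorem levelPos_subcolumnOffset_add {n k : ℕ} (t : Fin 3) (hk : k < chaconH n) :
    levelPos (n + 1) (subcolumnOffset n t + k) = 3 * levelPos n k + t := by
  fin_cases t
  · simp [subcolumnOffset, levelPos, hk]
  · have hlt : chaconH n + k < 2 * chaconH n := by omega
    simp [subcolumnOffset, levelPos, hlt]
  · have hlt : ¬ 2 * chaconH n + 1 + k < chaconH n := by omega
    have hlt₂ : ¬ 2 * chaconH n + 1 + k < 2 * chaconH n := by omega
    have hne : 2 * chaconH n + 1 + k ≠ 2 * chaconH n := by omega
    have hle : 2 * chaconH n + 1 + k ≤ 3 * chaconH n := by omega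
    have hsub : 2 * chaconH n + 1 + k - 2 * chaconH n - 1 = k := by omega
    simp [subcolumnOffset, levelPos, hlt, hlt₂, hne, hle, hsub]

theorem levelPos_surjOn (n : ℕ) : SurjOn (levelPos n) (Iio (chaconH n)) (Iio (chaconH n)) := by
  induction n with
  | zero => simp [chaconH, levelPos, SurjOn]
  | succ n ih =>
    intro s hs
    rw [mem_Iio, chaconH] at hs
    have hpos := chaconH_pos n
    rcases lt_trichotomy s (3 * chaconH n) with hlt | rfl | hgt
    · obtain ⟨k, hk, hks⟩ := ih (show s / 3 < chaconH n by omega)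
      refine ⟨subcolumnOffset n (Fin.ofNat 3 s) + k, ?_, ?_⟩
      · have := subcolumnOffset_add_lt (Fin.ofNat 3 s) hk
        rw [mem_Iio, chaconH]; omega
      · rw [levelPos_subcolumnOffset_add _ hk, hks, Fin.val_ofNat, Nat.div_add_mod]
    · refine ⟨2 * chaconH n, by rw [mem_Iio, chaconH]; omega, ?_⟩
      rw [levelPos, if_neg (by omega), if_neg (by omega), if_pos rfl]
    · refine ⟨s, by rw [mem_Iio, chaconH]; omega, ?_⟩
      rw [levelPos, if_neg (by omega), if_neg (by omega), if_neg (by omega), if_neg (by omega)]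

theorem levelPos_injOn (n : ℕ) : InjOn (levelPos n) (Iio (chaconH n)) := by
  have hsub : Finset.range (chaconH n) ⊆ (Finset.range (chaconH n)).image (levelPos n) := by
    intro s hs
    simpa using levelPos_surjOn n (Finset.mem_range.1 hs)
  have hcard := Finset.card_image_le.antisymm (Finset.card_le_card hsub)
  simpa using Finset.card_image_iff.1 hcard

/-- The point `x` lies in level `k` of tower `n`. -/
def InLevel (n k : ℕ) (x : ChaconX) : Prop := k < chaconH n ∧ (x : ℝ) ∈ chaconLevel n k

theorem three_pow_mul_nonneg (n : ℕ) (x : ChaconX) : 0 ≤ 3 ^ n * (x : ℝ) :=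
  mul_nonneg (by positivity) x.2

theorem inLevel_iff {n k : ℕ} {x : ChaconX} :
    InLevel n k x ↔ k < chaconH n ∧ ⌊3 ^ n * (x : ℝ)⌋₊ = levelPos n k := by
  rw [InLevel, chaconLevel, chaconL_eq_levelPos_div, Nat.floor_eq_iff (three_pow_mul_nonneg n x),
    mem_Ico, inv_pow, ← one_div, ← add_div, div_le_iff₀' (by positivity),
    lt_div_iff₀' (by positivity)]

theorem InLevel.unique {n k l : ℕ} {x : ChaconX} (hk : InLevel n k x) (hl : InLevel n l x) :
    k = l := by
  rw [inLevel_iff] at hk hl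
  exact levelPos_injOn n hk.1 hl.1 (hk.2.symm.trans hl.2)

theorem exists_inLevel {n : ℕ} {x : ChaconX} (hx : (x : ℝ) < 2 ^ n) : ∃ k, InLevel n k x := by
  have hlt : 3 ^ n * (x : ℝ) < chaconH n := calc
    3 ^ n * (x : ℝ) < 3 ^ n * 2 ^ n := by gcongr
    _ ≤ chaconH n := by
      rw [mul_comm]; exact_mod_cast two_pow_mul_three_pow_le_chaconH n
  have hfloor : ⌊3 ^ n * (x : ℝ)⌋₊ < chaconH n :=
    (Nat.floor_lt (three_pow_mul_nonneg n x)).2 hlt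
  obtain ⟨k, hk, hkx⟩ := levelPos_surjOn n hfloor
  exact ⟨k, inLevel_iff.2 ⟨hk, hkx.symm⟩⟩

/-- The subcolumn of tower `n`, numbered from `0`, through `x`: the ternary digit of `x` at place
`n + 1`. -/
noncomputable def subcolumn (n : ℕ) (x : ChaconX) : Fin 3 := Fin.ofNat 3 ⌊3 ^ (n + 1) * (x : ℝ)⌋₊

theorem floor_three_pow_succ_mul (n : ℕ) (x : ChaconX) :
    ⌊3 ^ (n + 1) * (x : ℝ)⌋₊ = 3 * ⌊3 ^ n * (x : ℝ)⌋₊ + subcolumn n x := by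
  have hdiv : ⌊3 ^ n * (x : ℝ)⌋₊ = ⌊3 ^ (n + 1) * (x : ℝ)⌋₊ / 3 := by
    rw [← Nat.floor_div_ofNat, pow_succ]; congr 1; ring
  rw [subcolumn, Fin.val_ofNat, hdiv, Nat.div_add_mod]

theorem InLevel.succ {n k : ℕ} {x : ChaconX} (h : InLevel n k x) :
    InLevel (n + 1) (subcolumnOffset n (subcolumn n x) + k) x := by
  have hlt := subcolumnOffset_add_lt (subcolumn n x) h.1
  rw [inLevel_iff] at h ⊢
  refine ⟨by rw [chaconH]; omega, ?_⟩
  rw [levelPos_subcolumnOffset_add _ h.1, floor_three_pow_succ_mul, h.2]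

theorem InLevel.of_succ {n k : ℕ} {t : Fin 3} {x : ChaconX} (hk : k < chaconH n)
    (h : InLevel (n + 1) (subcolumnOffset n t + k) x) : InLevel n k x ∧ subcolumn n x = t := by
  have hpos := (inLevel_iff.1 h).2
  rw [levelPos_subcolumnOffset_add _ hk, floor_three_pow_succ_mul] at hpos
  exact ⟨inLevel_iff.2 ⟨hk, by omega⟩, Fin.ext (by omega)⟩

theorem eq_of_forall_inLevel {m : ℕ} {x y : ChaconX}
    (h : ∀ n, m ≤ n → ∃ k, InLevel n k x ∧ InLevel n k y) : x = y := by
  by_contra hne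
  have hpos : 0 < |(x : ℝ) - y| := abs_pos.2 (sub_ne_zero.2 (Subtype.coe_injective.ne hne))
  obtain ⟨r, hr⟩ := exists_pow_lt_of_lt_one hpos (by norm_num : (3 : ℝ)⁻¹ < 1)
  obtain ⟨k, ⟨-, hxk⟩, -, hyk⟩ := h (max m r) (le_max_left m r)
  have hlt : |(x : ℝ) - y| < (3 : ℝ)⁻¹ ^ max m r :=
    abs_sub_lt_iff.2 ⟨by linarith [hxk.2, hyk.1], by linarith [hxk.1, hyk.2]⟩
  have hle : (3 : ℝ)⁻¹ ^ max m r ≤ (3 : ℝ)⁻¹ ^ r :=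
    pow_le_pow_of_le_one (by norm_num) (by norm_num) (le_max_right m r)
  linarith

theorem mem_chaconC_iff {n : ℕ} {x : ChaconX} :
    x ∈ chaconC n ↔ ∃ k, k < chaconH n / 2 ∧ InLevel n k x :=
  exists_congr fun _ => and_congr_right fun hk => by
    rw [InLevel, and_iff_right (show _ < chaconH n by omega)]

theorem InLevel.mem_chaconC_succ {n k : ℕ} {x : ChaconX} (h : InLevel n k x) :
    x ∈ chaconC (n + 1) := by
  have hlt := subcolumnOffset_add_lt (subcolumn n x) h.1
  exact mem_chaconC_iff.2 ⟨_, by rw [chaconH]; omega, h.succ⟩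

theorem chaconC_mono : Monotone chaconC :=
  monotone_nat_of_le_succ fun _ _ hx =>
    let ⟨_, _, h⟩ := mem_chaconC_iff.1 hx
    h.mem_chaconC_succ

theorem eventually_mem_chaconC (x : ChaconX) : ∀ᶠ n in Filter.atTop, x ∈ chaconC n := by
  obtain ⟨N, hN⟩ := pow_unbounded_of_one_lt (x : ℝ) one_lt_two
  obtain ⟨k, hk⟩ := exists_inLevel hN
  filter_upwards [Filter.eventually_ge_atTop (N + 1)] with n hn
  exact chaconC_mono hn hk.mem_chaconC_succ

theorem measurableSet_chaconC (n : ℕ) : MeasurableSet (chaconC n) := by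
  have hC : chaconC n = ⋃ k < chaconH n / 2, Subtype.val ⁻¹' chaconLevel n k := by
    ext x; simp [chaconC]
  rw [hC]
  exact .biUnion (to_countable _) fun _ _ => measurable_subtype_coe measurableSet_Ico

/-- The point at the height of level `k` in the column of tower `n` through `x`. The column is
indexed by the offset of `x` in its level, which is the residue of `x` modulo `3⁻ⁿ`. -/
noncomputable def columnPoint (n k : ℕ) (x : ChaconX) : ChaconX :=
  ⟨(levelPos n k + Int.fract (3 ^ n * (x : ℝ))) / 3 ^ n, mem_Ici.2 (by positivity)⟩

/-- The points `x` and `y`, when both lie in tower `n`, are in the same column: they agree modulo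
`3⁻ⁿ`. -/
def SameColumn (n : ℕ) (x y : ChaconX) : Prop :=
  Int.fract (3 ^ n * (x : ℝ)) = Int.fract (3 ^ n * (y : ℝ))

theorem SameColumn.columnPoint_eq {n : ℕ} {x y : ChaconX} (h : SameColumn n x y) (k : ℕ) :
    columnPoint n k x = columnPoint n k y := by
  rw [columnPoint, columnPoint, Subtype.mk.injEq, h]

theorem SameColumn.mono {m n : ℕ} (hmn : m ≤ n) {x y : ChaconX} (h : SameColumn m x y) :
    SameColumn n x y := by
  obtain ⟨z, hz⟩ := Int.fract_eq_fract.1 h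
  refine Int.fract_eq_fract.2 ⟨3 ^ (n - m) * z, ?_⟩
  push_cast
  rw [← hz, ← Nat.sub_add_cancel hmn, pow_add, Nat.add_sub_cancel]
  ring

theorem three_pow_mul_columnPoint (n k : ℕ) (x : ChaconX) :
    3 ^ n * (columnPoint n k x : ℝ) = levelPos n k + Int.fract (3 ^ n * (x : ℝ)) :=
  mul_div_cancel₀ (G₀ := ℝ) _ (pow_ne_zero n three_ne_zero)

theorem sameColumn_columnPoint (n k : ℕ) (x : ChaconX) : SameColumn n (columnPoint n k x) x := by
  rw [SameColumn, three_pow_mul_columnPoint, Int.fract_natCast_add, Int.fract_fract]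

theorem inLevel_columnPoint {n k : ℕ} (hk : k < chaconH n) (x : ChaconX) :
    InLevel n k (columnPoint n k x) := by
  refine inLevel_iff.2 ⟨hk, ?_⟩
  rw [three_pow_mul_columnPoint, add_comm, Nat.floor_add_natCast (Int.fract_nonneg _),
    Nat.floor_eq_zero.2 (Int.fract_lt_one _), zero_add]

theorem InLevel.columnPoint_eq {n k : ℕ} {x : ChaconX} (h : InLevel n k x) :
    columnPoint n k x = x := by
  apply Subtype.ext
  apply mul_left_cancel₀ (pow_ne_zero n (three_ne_zero (α := ℝ)))
  rw [three_pow_mul_columnPoint, ← (inLevel_iff.1 h).2,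
    natCast_floor_eq_intCast_floor (three_pow_mul_nonneg n x), Int.floor_add_fract]

theorem InLevel.sub_add_chaconL {n k : ℕ} {x : ChaconX} (h : InLevel n k x) (j : ℕ) :
    (x : ℝ) - chaconL n k + chaconL n j = columnPoint n j x := by
  conv_lhs => rw [← h.columnPoint_eq]
  simp only [columnPoint, chaconL_eq_levelPos_div]
  ring

theorem columnPoint_subcolumn (n : ℕ) {j : ℕ} (hj : j < chaconH n) (x : ChaconX) :
    columnPoint (n + 1) (subcolumnOffset n (subcolumn n x) + j) x = columnPoint n j x := by
  have hfract : 3 * Int.fract (3 ^ n * (x : ℝ))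
      = subcolumn n x + Int.fract (3 ^ (n + 1) * (x : ℝ)) := by
    have hfloor : (⌊3 ^ (n + 1) * (x : ℝ)⌋₊ : ℝ) = 3 * ⌊3 ^ n * (x : ℝ)⌋₊ + subcolumn n x :=
      mod_cast floor_three_pow_succ_mul n x
    rw [natCast_floor_eq_intCast_floor (three_pow_mul_nonneg _ x),
      natCast_floor_eq_intCast_floor (three_pow_mul_nonneg _ x)] at hfloor
    rw [← Int.self_sub_floor, ← Int.self_sub_floor, hfloor]
    ring
  apply Subtype.ext
  simp only [columnPoint, levelPos_subcolumnOffset_add _ hj]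
  push_cast
  rw [add_assoc, ← hfract, ← mul_add, pow_succ', mul_div_mul_left _ _ three_ne_zero]

theorem measurable_columnPoint (n k : ℕ) : Measurable (columnPoint n k) := by
  unfold columnPoint
  fun_prop

theorem exists_columnPoint_add_eq {m n : ℕ} (hmn : m ≤ n) (x : ChaconX) :
    ∃ d, ∀ j < chaconH m, d + j < chaconH n ∧ columnPoint n (d + j) x = columnPoint m j x := by
  induction n, hmn using Nat.le_induction with
  | base => exact ⟨0, fun j hj => by simpa only [zero_add, and_true] using hj⟩
  | succ n _ ih =>
    obtain ⟨d, hd⟩ := ih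
    refine ⟨subcolumnOffset n (subcolumn n x) + d, fun j hj => ?_⟩
    obtain ⟨hlt, heq⟩ := hd j hj
    have hlt_succ := subcolumnOffset_add_lt (subcolumn n x) hlt
    rw [add_assoc, columnPoint_subcolumn n hlt, chaconH]
    exact ⟨by omega, heq⟩

theorem InLevel.of_columnPoint_eq {n k : ℕ} {x : ChaconX} (hk : k < chaconH n)
    (h : columnPoint n k x = x) : InLevel n k x :=
  h ▸ inLevel_columnPoint hk x

theorem InLevel.columnPoint_succ_eq {m n k l : ℕ} {x : ChaconX} (hmk : InLevel m k x)
    (hk : k + 1 < chaconH m) (hnl : InLevel n l x) (hl : l + 1 < chaconH n) :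
    columnPoint m (k + 1) x = columnPoint n (l + 1) x := by
  obtain ⟨d, hd⟩ := exists_columnPoint_add_eq (le_max_left m n) x
  obtain ⟨e, he⟩ := exists_columnPoint_add_eq (le_max_right m n) x
  have hdk : InLevel (max m n) (d + k) x :=
    .of_columnPoint_eq (hd k hmk.1).1 ((hd k hmk.1).2.trans hmk.columnPoint_eq)
  have hel : InLevel (max m n) (e + l) x :=
    .of_columnPoint_eq (he l hnl.1).1 ((he l hnl.1).2.trans hnl.columnPoint_eq)
  have hindex : d + (k + 1) = e + (l + 1) := by have := hdk.unique hel; omega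
  rw [← (hd _ hk).2, ← (he _ hl).2, hindex]

theorem chaconT_eq_columnPoint {n k : ℕ} {x : ChaconX} (h : InLevel n k x)
    (hk : k + 1 < chaconH n) : chaconT x = columnPoint n (k + 1) x := by
  have hex : ∃ p : ℕ × ℕ, p.2 + 1 < chaconH p.1 ∧ (x : ℝ) ∈ chaconLevel p.1 p.2 :=
    ⟨(n, k), hk, h.2⟩
  obtain ⟨hlt, hmem⟩ := hex.choose_spec
  have hlevel : InLevel hex.choose.1 hex.choose.2 x := ⟨Nat.lt_of_succ_lt hlt, hmem⟩
  have hT0 : chaconT0 x = columnPoint n (k + 1) x := by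
    rw [chaconT0, dif_pos hex, hlevel.sub_add_chaconL, h.columnPoint_succ_eq hk hlevel hlt]
  exact Subtype.ext ((congrArg (max 0) hT0).trans (max_eq_right (Subtype.property _)))

theorem iterate_chaconT_eq_columnPoint {n k j : ℕ} {x : ChaconX} (h : InLevel n k x)
    (hkj : k + j < chaconH n) : chaconT^[j] x = columnPoint n (k + j) x := by
  induction j with
  | zero => exact h.columnPoint_eq.symm
  | succ j ih =>
    rw [Function.iterate_succ_apply', ih (by omega),
      chaconT_eq_columnPoint (k := k + j) (inLevel_columnPoint (by omega) x) hkj,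
      (sameColumn_columnPoint n (k + j) x).columnPoint_eq, add_assoc]

theorem InLevel.iterate_chaconT {n k j : ℕ} {x : ChaconX} (h : InLevel n k x)
    (hkj : k + j < chaconH n) : InLevel n (k + j) (chaconT^[j] x) := by
  rw [iterate_chaconT_eq_columnPoint h hkj]
  exact inLevel_columnPoint hkj x

theorem SameColumn.iterate_chaconT_eq {n k l : ℕ} {x y : ChaconX} (hxy : SameColumn n x y)
    (hx : InLevel n k x) (hy : InLevel n l y) : chaconT^[l - k] x = chaconT^[k - l] y := by
  have hk := hx.1
  have hl := hy.1
  rw [iterate_chaconT_eq_columnPoint hx (by omega), iterate_chaconT_eq_columnPoint hy (by omega),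
    hxy.columnPoint_eq, show k + (l - k) = l + (k - l) by omega]

theorem eventually_exists_inLevel (x : ChaconX) :
    ∀ᶠ n in Filter.atTop, ∃ k, InLevel n k x ∧ k + 1 < chaconH n := by
  filter_upwards [eventually_mem_chaconC x] with n hn
  obtain ⟨k, hk, hx⟩ := mem_chaconC_iff.1 hn
  exact ⟨k, hx, by omega⟩

theorem columnPoint_chaconT {n k : ℕ} {x : ChaconX} (h : InLevel n k x)
    (hk : k + 1 < chaconH n) : columnPoint n k (chaconT x) = x := by
  rw [chaconT_eq_columnPoint h hk, (sameColumn_columnPoint n _ x).columnPoint_eq, h.columnPoint_eq]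

theorem chaconT_injective : Function.Injective chaconT := by
  intro x y hxy
  obtain ⟨n, ⟨k, hx, hk⟩, l, hy, hl⟩ :=
    ((eventually_exists_inLevel x).and (eventually_exists_inLevel y)).exists
  have hTx : InLevel n (k + 1) (chaconT x) := hx.iterate_chaconT hk
  have hTy : InLevel n (l + 1) (chaconT y) := hy.iterate_chaconT hl
  have hkl : k + 1 = l + 1 := hTx.unique (hxy ▸ hTy)
  rw [← columnPoint_chaconT hx hk, hxy, Nat.succ_injective hkl, columnPoint_chaconT hy hl]

theorem chaconTinv_chaconT : Function.LeftInverse chaconTinv chaconT := by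
  intro x
  set y := chaconT x
  have hex : ∃ p : ℕ × ℕ, p.2 + 1 < chaconH p.1 ∧ (y : ℝ) ∈ chaconLevel p.1 (p.2 + 1) := by
    obtain ⟨n, k, hx, hk⟩ := (eventually_exists_inLevel x).exists
    exact ⟨(n, k), hk, (hx.iterate_chaconT (j := 1) hk).2⟩
  obtain ⟨hlt, hmem⟩ := hex.choose_spec
  have hlevel : InLevel hex.choose.1 (hex.choose.2 + 1) y := ⟨hlt, hmem⟩
  have hinv : chaconTinv y = columnPoint hex.choose.1 hex.choose.2 y := by
    have hT0inv : chaconT0inv y = columnPoint hex.choose.1 hex.choose.2 y := by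
      rw [chaconT0inv, dif_pos hex, hlevel.sub_add_chaconL]
    exact Subtype.ext ((congrArg (max 0) hT0inv).trans (max_eq_right (Subtype.property _)))
  apply chaconT_injective
  rw [hinv, chaconT_eq_columnPoint (inLevel_columnPoint (Nat.lt_of_succ_lt hlt) y) hlt,
    (sameColumn_columnPoint _ _ y).columnPoint_eq, hlevel.columnPoint_eq]

theorem measurable_chaconT : Measurable chaconT := by
  intro B hB
  have hpreimage : chaconT ⁻¹' B = ⋃ (n : ℕ) (k : ℕ) (_ : k + 1 < chaconH n),
      (Subtype.val ⁻¹' chaconLevel n k) ∩ columnPoint n (k + 1) ⁻¹' B := by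
    ext x
    simp only [mem_iUnion, mem_inter_iff, mem_preimage, exists_prop]
    constructor
    · intro hx
      obtain ⟨n, k, hk, hlt⟩ := (eventually_exists_inLevel x).exists
      exact ⟨n, k, hlt, hk.2, chaconT_eq_columnPoint hk hlt ▸ hx⟩
    · rintro ⟨n, k, hlt, hk, hx⟩
      rwa [chaconT_eq_columnPoint ⟨Nat.lt_of_succ_lt hlt, hk⟩ hlt]
  rw [hpreimage]
  exact .iUnion fun n => .iUnion fun k => .iUnion fun _ =>
    (measurable_subtype_coe measurableSet_Ico).inter (measurable_columnPoint n (k + 1) hB)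

theorem eq_chaconTZ_of_iterate_eq {a b : ℕ} {x y : ChaconX}
    (h : chaconT^[a] y = chaconT^[b] x) : y = chaconTZ (b - a) x := by
  rcases le_or_gt a b with hab | hba
  · obtain ⟨d, rfl⟩ := Nat.exists_eq_add_of_le hab
    rw [Function.iterate_add_apply] at h
    rw [chaconTZ, if_pos (by omega), show ((a + d : ℕ) - a : ℤ).toNat = d by omega]
    exact chaconT_injective.iterate a h
  · obtain ⟨d, rfl⟩ := Nat.exists_eq_add_of_le hba.le
    rw [Function.iterate_add_apply] at h
    rw [chaconTZ, if_neg (by omega), show (-((b : ℤ) - (b + d : ℕ))).toNat = d by omega,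
      ← chaconT_injective.iterate b h]
    exact (chaconTinv_chaconT.iterate d y).symm

section Circle

variable (N : ℕ) [Fact (0 < (N : ℝ))]

/-- The representative in `[0, N) ⊆ X` of a point of the circle `ℝ / Nℤ`. Through it, moving between
the levels of a high tower within a column becomes a rotation of the circle. -/
noncomputable def circleRep (y : AddCircle (N : ℝ)) : ChaconX :=
  ⟨AddCircle.equivIco (N : ℝ) 0 y, mem_Ici.2 (AddCircle.equivIco (N : ℝ) 0 y).2.1⟩

variable {N}

theorem circleRep_lt (y : AddCircle (N : ℝ)) : (circleRep N y : ℝ) < N :=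
  (AddCircle.equivIco (N : ℝ) 0 y).2.2.trans_eq (zero_add _)

theorem circleRep_coe {x : ℝ} (hx : x ∈ Ico 0 (0 + (N : ℝ))) :
    circleRep N x = ⟨x, mem_Ici.2 hx.1⟩ := by
  rw [circleRep, Subtype.mk.injEq, AddCircle.equivIco_coe_eq hx]

theorem exists_circleRep_add_eq (y : AddCircle (N : ℝ)) (c : ℝ) :
    ∃ z : ℤ, (circleRep N (y + c) : ℝ) = circleRep N y + c + z * N := by
  have hcoe (w : AddCircle (N : ℝ)) : ((circleRep N w : ℝ) : AddCircle (N : ℝ)) = w :=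
    AddCircle.coe_equivIco
  obtain ⟨z, hz⟩ := (AddCircle.coe_eq_zero_iff (N : ℝ)).1
    (show ((circleRep N (y + c) - (circleRep N y + c) : ℝ) : AddCircle (N : ℝ)) = 0 by
      rw [AddCircle.coe_sub, AddCircle.coe_add, hcoe, hcoe, sub_self])
  exact ⟨z, by rw [← zsmul_eq_mul, hz]; ring⟩

theorem exists_three_pow_mul_circleRep_add_eq (n j : ℕ) (y : AddCircle (N : ℝ)) :
    ∃ z : ℤ, 3 ^ n * (circleRep N (y + (j / 3 ^ n : ℝ)) : ℝ)
      = 3 ^ n * circleRep N y + (j + 3 ^ n * z : ℤ) := by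
  obtain ⟨z, hz⟩ := exists_circleRep_add_eq y (j / 3 ^ n)
  refine ⟨z * N, ?_⟩
  rw [hz]
  push_cast
  field_simp
  ring

theorem sameColumn_circleRep_add (n j : ℕ) (y : AddCircle (N : ℝ)) :
    SameColumn n (circleRep N (y + (j / 3 ^ n : ℝ))) (circleRep N y) := by
  obtain ⟨z, hz⟩ := exists_three_pow_mul_circleRep_add_eq n j y
  rw [SameColumn, hz, Int.fract_add_intCast]

theorem subcolumn_circleRep_add (n : ℕ) (t : Fin 3) (y : AddCircle (N : ℝ)) :
    subcolumn n (circleRep N (y + ((t : ℕ) / 3 ^ (n + 1) : ℝ)))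
      = subcolumn n (circleRep N y) + t := by
  obtain ⟨z, hz⟩ := exists_three_pow_mul_circleRep_add_eq (n + 1) t y
  have hfloor := congrArg Int.floor hz
  rw [Int.floor_add_intCast, ← Int.natCast_floor_eq_floor (three_pow_mul_nonneg _ _),
    ← Int.natCast_floor_eq_floor (three_pow_mul_nonneg _ _), pow_succ' (3 : ℤ),
    mul_assoc (3 : ℤ)] at hfloor
  apply Fin.ext
  rw [subcolumn, subcolumn, Fin.val_add, Fin.val_ofNat, Fin.val_ofNat]
  omega

theorem measurePreserving_circleRep :
    MeasurePreserving (circleRep N) volume (chaconMu.restrict {x | (x : ℝ) < N}) := by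
  have hmeas : Measurable (circleRep N) :=
    (measurable_subtype_coe.comp (AddCircle.measurableEquivIco (N : ℝ) 0).measurable).subtype_mk
  refine ⟨hmeas, Measure.ext fun A hA => ?_⟩
  have himage : Subtype.val '' (A ∩ {x | (x : ℝ) < N})
      = ((↑) : ℝ → AddCircle (N : ℝ)) ⁻¹' (circleRep N ⁻¹' A) ∩ Ico 0 (0 + N) := by
    ext x
    rw [mem_image, mem_inter_iff, mem_preimage, mem_preimage]
    constructor
    · rintro ⟨x, ⟨hxA, hxN⟩, rfl⟩
      have hx : (x : ℝ) ∈ Ico 0 (0 + (N : ℝ)) := ⟨x.2, (zero_add (N : ℝ)).symm ▸ hxN⟩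
      exact ⟨(circleRep_coe hx).symm ▸ hxA, hx⟩
    · rintro ⟨hxA, hx⟩
      exact ⟨⟨x, hx.1⟩, ⟨circleRep_coe hx ▸ hxA, hx.2.trans_eq (zero_add _)⟩, rfl⟩
  rw [Measure.map_apply hmeas hA, Measure.restrict_apply hA, chaconMu,
    comap_subtype_coe_apply measurableSet_Ici, himage,
    ← (AddCircle.measurePreserving_mk (N : ℝ) 0).measure_preimage (hmeas hA).nullMeasurableSet,
    Measure.restrict_congr_set Ico_ae_eq_Ioc.symm,
    Measure.restrict_apply (AddCircle.measurable_mk' (hmeas hA))]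

end Circle

theorem SameColumn.mem_iff_of_preimage_eq {n k l : ℕ} {x y : ChaconX} {A : Set ChaconX}
    (hA : chaconT ⁻¹' A = A) (hxy : SameColumn n x y) (hx : InLevel n k x) (hy : InLevel n l y) :
    x ∈ A ↔ y ∈ A := by
  have hiter (j : ℕ) (z : ChaconX) : chaconT^[j] z ∈ A ↔ z ∈ A :=
    Set.ext_iff.1 (Function.IsFixedPt.preimage_iterate hA j) z
  rw [← hiter (l - k) x, hxy.iterate_chaconT_eq hx hy, hiter]

theorem ae_circleRep_preimage_of_preimage_eq (N : ℕ) [Fact (0 < (N : ℝ))] {A : Set ChaconX}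
    (hAm : MeasurableSet A) (hA : chaconT ⁻¹' A = A) :
    circleRep N ⁻¹' A =ᵐ[volume] (∅ : Set (AddCircle (N : ℝ))) ∨
      circleRep N ⁻¹' A =ᵐ[volume] (univ : Set (AddCircle (N : ℝ))) := by
  let u (i : ℕ) : AddCircle (N : ℝ) := ((N : ℝ) / (3 ^ (N + i) : ℕ) : ℝ)
  have hu (i : ℕ) (y : AddCircle (N : ℝ)) : circleRep N (y + u i) ∈ A ↔ circleRep N y ∈ A := by
    have hlevel (w : AddCircle (N : ℝ)) : ∃ k, InLevel (N + i) k (circleRep N w) :=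
      exists_inLevel ((circleRep_lt w).trans_le (mod_cast Nat.lt_two_pow_self.le.trans
        (Nat.pow_le_pow_right two_pos (Nat.le_add_right N i))))
    obtain ⟨k, hk⟩ := hlevel (y + u i)
    obtain ⟨l, hl⟩ := hlevel y
    have hcol : SameColumn (N + i) (circleRep N (y + u i)) (circleRep N y) := by
      simpa [u] using sameColumn_circleRep_add (N + i) N y
    exact hcol.mem_iff_of_preimage_eq hA hk hl
  refine AddCircle.ae_empty_or_univ_of_forall_vadd_ae_eq_self (u := u) (l := Filter.atTop)
    (measurePreserving_circleRep.measurable hAm).nullMeasurableSet (fun i => ?_) ?_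
  · refine Filter.EventuallyEq.of_eq (Set.ext fun y => ?_)
    rw [mem_vadd_set_iff_neg_vadd_mem, mem_preimage, mem_preimage, ← hu i, vadd_eq_add,
      neg_add_cancel_comm]
  · have horder : addOrderOf ∘ u = fun i => 3 ^ (N + i) :=
      funext fun i => AddCircle.addOrderOf_period_div (by positivity)
    rw [horder]
    exact (tendsto_pow_atTop_atTop_of_one_lt (by norm_num)).comp
      (Filter.tendsto_add_atTop_nat N |>.congr fun i => add_comm i N)

theorem chacon_measErgodic : MeasErgodic chaconMu chaconT := by
  intro A hAm hA
  have hN (N : ℕ) [Fact (0 < (N : ℝ))] :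
      chaconMu (A ∩ {x | (x : ℝ) < N}) = 0 ∨ chaconMu (Aᶜ ∩ {x | (x : ℝ) < N}) = 0 := by
    rw [← Measure.restrict_apply hAm, ← Measure.restrict_apply hAm.compl,
      ← (measurePreserving_circleRep (N := N)).measure_preimage hAm.nullMeasurableSet,
      ← (measurePreserving_circleRep (N := N)).measure_preimage hAm.compl.nullMeasurableSet,
      preimage_compl]
    exact (ae_circleRep_preimage_of_preimage_eq N hAm hA).imp ae_eq_empty.1 ae_eq_univ.1
  have hcover (B : Set ChaconX) (hB : chaconMu B ≠ 0) :
      ∃ N₀ : ℕ, ∀ N ≥ N₀, chaconMu (B ∩ {x | (x : ℝ) < N}) ≠ 0 := by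
    have hunion : B = ⋃ N : ℕ, B ∩ {x | (x : ℝ) < N} := by
      rw [← inter_iUnion, eq_comm, inter_eq_left]
      exact fun x _ => mem_iUnion.2 (exists_nat_gt (x : ℝ))
    rw [hunion] at hB
    obtain ⟨N₀, hN₀⟩ := exists_measure_pos_of_not_measure_iUnion_null hB
    refine ⟨N₀, fun N hN => (hN₀.trans_le (measure_mono ?_)).ne'⟩
    exact fun x hx => ⟨hx.1, hx.2.out.trans_le (Nat.cast_le.2 hN)⟩
  by_contra! hcon
  obtain ⟨N₁, hN₁⟩ := hcover A hcon.1
  obtain ⟨N₂, hN₂⟩ := hcover Aᶜ hcon.2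
  have : Fact (0 < ((max N₁ N₂ + 1 : ℕ) : ℝ)) := ⟨by positivity⟩
  rcases hN (max N₁ N₂ + 1) with h | h
  · exact hN₁ _ (by omega) h
  · exact hN₂ _ (by omega) h

section MaximalInequality

variable {α ι : Type*} [Fintype ι] [MeasurableSpace α] {μ : Measure α} {B : Set α}

theorem measure_le_card_mul_of_subset_iUnion_preimage {τ : ι → α → α} {E : Set α}
    (hτ : ∀ i, MeasurePreserving (τ i) μ μ) (hB : MeasurableSet B) (hE : MeasurableSet E)
    (hinv : ∀ i, τ i ⁻¹' E = E) (hsub : E ⊆ ⋃ i, τ i ⁻¹' B) :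
    μ E ≤ Fintype.card ι * μ (B ∩ E) := by
  have hcover : E ⊆ ⋃ i, τ i ⁻¹' (B ∩ E) := by
    simp only [preimage_inter, hinv, ← iUnion_inter]
    exact subset_inter hsub subset_rfl
  calc μ E ≤ ∑ i, μ (τ i ⁻¹' (B ∩ E)) :=
        (measure_mono hcover).trans (measure_iUnion_fintype_le μ _)
    _ = Fintype.card ι * μ (B ∩ E) := by
        simp only [fun i => (hτ i).measure_preimage (hB.inter hE).nullMeasurableSet,
          Finset.sum_const, Finset.card_univ, nsmul_eq_mul]

variable {τ : ℕ → ι → α → α} {D : ℕ → Set α}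

/- Each point of the union is charged to the last `D r` containing it; this is why `D r` has to be
invariant under all `τ s` with `s ≤ r`. -/
theorem measure_accumulate_le_card_mul (hτ : ∀ r i, MeasurePreserving (τ r i) μ μ)
    (hB : MeasurableSet B) (hD : ∀ r, MeasurableSet (D r))
    (hsub : ∀ r, D r ⊆ ⋃ i, τ r i ⁻¹' B) (R : ℕ)
    (hinv : ∀ r ≤ R, ∀ s ≤ r, ∀ i, τ s i ⁻¹' D r = D r) :
    μ (accumulate D R) ≤ Fintype.card ι * μ (B ∩ accumulate D R) := by
  induction R generalizing D with
  | zero =>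
    rw [accumulate_zero_nat]
    exact measure_le_card_mul_of_subset_iUnion_preimage (hτ 0) hB (hD 0) (hinv 0 le_rfl 0 le_rfl)
      (hsub 0)
  | succ R ih =>
    set E := D (R + 1)
    have hE : MeasurableSet E := hD (R + 1)
    let D' (r : ℕ) : Set α := D r \ E
    have hbefore : μ (accumulate D' R) ≤ Fintype.card ι * μ (B ∩ accumulate D' R) := by
      refine ih (fun r => (hD r).diff hE) (fun r => sdiff_subset.trans (hsub r))
        fun r hr s hs i => ?_
      rw [preimage_sdiff, hinv r (by omega) s hs i, hinv (R + 1) le_rfl s (by omega) i]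
    have hlast : μ E ≤ Fintype.card ι * μ (B ∩ E) :=
      measure_le_card_mul_of_subset_iUnion_preimage (hτ (R + 1)) hB hE
        (hinv (R + 1) le_rfl (R + 1) le_rfl) (hsub (R + 1))
    have hunion : accumulate D (R + 1) = accumulate D' R ∪ E := by
      rw [accumulate_succ, show accumulate D' R = accumulate D R \ E by
        simp only [accumulate_def, D', iUnion_sdiff], sdiff_union_self]
    have hdisj : Disjoint (accumulate D' R) E := by
      simp only [accumulate_def, disjoint_iUnion_left]
      exact fun _ _ => disjoint_sdiff_left
    calc μ (accumulate D (R + 1)) ≤ μ (accumulate D' R) + μ E := by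
          rw [hunion]; exact measure_union_le _ _
      _ ≤ Fintype.card ι * μ (B ∩ accumulate D' R) + Fintype.card ι * μ (B ∩ E) :=
          add_le_add hbefore hlast
      _ = Fintype.card ι * μ (B ∩ accumulate D (R + 1)) := by
          rw [← mul_add, hunion, inter_union_distrib_left,
            measure_union (hdisj.mono inter_subset_right inter_subset_right) (hB.inter hE)]

theorem measure_iUnion_le_card_mul (hτ : ∀ r i, MeasurePreserving (τ r i) μ μ)
    (hB : MeasurableSet B) (hD : ∀ r, MeasurableSet (D r))
    (hsub : ∀ r, D r ⊆ ⋃ i, τ r i ⁻¹' B) (hinv : ∀ r, ∀ s ≤ r, ∀ i, τ s i ⁻¹' D r = D r) :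
    μ (⋃ r, D r) ≤ Fintype.card ι * μ B := by
  rw [measure_iUnion_eq_iSup_accumulate]
  exact iSup_le fun R =>
    (measure_accumulate_le_card_mul hτ hB hD hsub R fun r _ => hinv r).trans
      (mul_le_mul_right (measure_mono inter_subset_left) _)

end MaximalInequality

/-- The points in whose column of tower `n + 1` some subcolumn of tower `n` misses `A`. -/
def subcolumnGap (A : Set ChaconX) (n : ℕ) : Set ChaconX :=
  {x | ∃ t : Fin 3, ∀ k < chaconH n, columnPoint (n + 1) (subcolumnOffset n t + k) x ∉ A}

theorem measurableSet_subcolumnGap {A : Set ChaconX} (hA : MeasurableSet A) (n : ℕ) :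
    MeasurableSet (subcolumnGap A n) := by
  have hgap : subcolumnGap A n = ⋃ t : Fin 3, ⋂ k : ℕ, ⋂ (_ : k < chaconH n),
      columnPoint (n + 1) (subcolumnOffset n t + k) ⁻¹' Aᶜ := by
    ext x
    simp only [subcolumnGap, mem_ofPred, mem_iUnion, mem_iInter, mem_preimage, mem_compl_iff]
  rw [hgap]
  exact .iUnion fun t => .iInter fun k => .iInter fun _ => measurable_columnPoint _ _ hA.compl

theorem SameColumn.mem_subcolumnGap_iff {A : Set ChaconX} {n : ℕ} {x y : ChaconX}
    (h : SameColumn (n + 1) x y) : x ∈ subcolumnGap A n ↔ y ∈ subcolumnGap A n := by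
  simp only [subcolumnGap, mem_ofPred, h.columnPoint_eq]

theorem exists_circleRep_add_notMem {N n : ℕ} [Fact (0 < (N : ℝ))] (hN : N ≤ 2 ^ n)
    {A : Set ChaconX} {y : AddCircle (N : ℝ)} (hy : circleRep N y ∈ subcolumnGap A n) :
    ∃ t : Fin 3, circleRep N (y + ((t : ℕ) / 3 ^ (n + 1) : ℝ)) ∉ A := by
  obtain ⟨t, ht⟩ := hy
  refine ⟨t - subcolumn n (circleRep N y), ?_⟩
  have hsub := subcolumn_circleRep_add n (t - subcolumn n (circleRep N y)) y
  have hcol := sameColumn_circleRep_add (n + 1) (t - subcolumn n (circleRep N y) : Fin 3) y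
  set w := circleRep N (y + (((t - subcolumn n (circleRep N y) : Fin 3) : ℕ) / 3 ^ (n + 1) : ℝ))
  rw [add_sub_cancel] at hsub
  obtain ⟨k, hk⟩ : ∃ k, InLevel n k w :=
    exists_inLevel ((circleRep_lt _).trans_le (mod_cast hN))
  have hw := hk.succ
  rw [hsub] at hw
  rw [← hw.columnPoint_eq, hcol.columnPoint_eq]
  exact ht k hk.1

theorem volume_circleRep_preimage_iUnion_subcolumnGap_le {N m : ℕ} [Fact (0 < (N : ℝ))]
    (hN : N ≤ 2 ^ m) {A : Set ChaconX} (hA : MeasurableSet A) :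
    volume (circleRep N ⁻¹' ⋃ r, subcolumnGap A (m + r)) ≤ 3 * volume (circleRep N ⁻¹' Aᶜ) := by
  let τ (r : ℕ) (t : Fin 3) (y : AddCircle (N : ℝ)) : AddCircle (N : ℝ) :=
    y + ((t : ℕ) / 3 ^ (m + r + 1) : ℝ)
  have hrep := (measurePreserving_circleRep (N := N)).measurable
  have hsub (r : ℕ) : circleRep N ⁻¹' subcolumnGap A (m + r)
      ⊆ ⋃ t, τ r t ⁻¹' (circleRep N ⁻¹' Aᶜ) := fun y hy =>
    mem_iUnion.2 (exists_circleRep_add_notMem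
      (hN.trans (Nat.pow_le_pow_right two_pos (Nat.le_add_right m r))) hy)
  have hinv (r s : ℕ) (hs : s ≤ r) (t : Fin 3) :
      τ s t ⁻¹' (circleRep N ⁻¹' subcolumnGap A (m + r))
        = circleRep N ⁻¹' subcolumnGap A (m + r) :=
    Set.ext fun y => SameColumn.mem_subcolumnGap_iff
      ((sameColumn_circleRep_add (m + s + 1) t y).mono (by omega))
  rw [preimage_iUnion]
  exact measure_iUnion_le_card_mul (τ := τ) (fun _ _ => measurePreserving_add_right _ _)
    (hrep hA.compl) (fun r => hrep (measurableSet_subcolumnGap hA _)) hsub hinv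

theorem exists_measure_compl_lt {α : Type*} [MeasurableSpace α] {μ : Measure α}
    [IsFiniteMeasure μ] {A : ℕ → Set α} (hmono : Monotone A) (hmeas : ∀ m, MeasurableSet (A m))
    (hcover : ∀ x, ∃ m, x ∈ A m) {ε : ℝ≥0∞} (hε : 0 < ε) : ∃ m, μ (A m)ᶜ < ε := by
  have hlim := tendsto_measure_iInter_atTop (μ := μ) (fun m => (hmeas m).compl.nullMeasurableSet)
    (fun _ _ hab => compl_subset_compl.2 (hmono hab)) ⟨0, measure_ne_top _ _⟩
  rw [← compl_iUnion, iUnion_eq_univ_iff.2 hcover, compl_univ, measure_empty] at hlim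
  exact (hlim.eventually_lt_const hε).exists

theorem exists_measure_diff_iUnion_subcolumnGap_ne_zero {A : ℕ → Set ChaconX} (hmono : Monotone A)
    (hmeas : ∀ m, MeasurableSet (A m)) (hcover : ∀ x, ∃ m, x ∈ A m) :
    ∃ m, chaconMu (A m \ ⋃ r, subcolumnGap (A m) (m + r)) ≠ 0 := by
  have : Fact (0 < ((1 : ℕ) : ℝ)) := ⟨by norm_num⟩
  have hrep := measurePreserving_circleRep (N := 1)
  obtain ⟨m, hm⟩ : ∃ m, volume (circleRep 1 ⁻¹' (A m)ᶜ) < 4⁻¹ :=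
    exists_measure_compl_lt (A := fun m => circleRep 1 ⁻¹' A m)
      (fun _ _ hab => preimage_mono (hmono hab)) (fun m => hrep.measurable (hmeas m))
      (fun y => hcover (circleRep 1 y)) (by simp)
  refine ⟨m, fun hzero => ?_⟩
  have hgood : volume (circleRep 1 ⁻¹' (A m \ ⋃ r, subcolumnGap (A m) (m + r))) = 0 := by
    rw [hrep.measure_preimage ((hmeas m).diff
      (.iUnion fun r => measurableSet_subcolumnGap (hmeas m) _)).nullMeasurableSet]
    exact nonpos_iff_eq_zero.1 (hzero ▸ Measure.restrict_apply_le _ _)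
  have hbad :=
    volume_circleRep_preimage_iUnion_subcolumnGap_le (m := m) Nat.one_le_two_pow (hmeas m)
  have huniv : (1 : ℝ≥0∞) < 1 := calc
    1 = volume (univ : Set (AddCircle ((1 : ℕ) : ℝ))) := by simp
    _ ≤ volume (circleRep 1 ⁻¹' (A m \ ⋃ r, subcolumnGap (A m) (m + r)))
        + volume (circleRep 1 ⁻¹' ⋃ r, subcolumnGap (A m) (m + r))
        + volume (circleRep 1 ⁻¹' (A m)ᶜ) := by
      refine (measure_mono fun y _ => ?_).trans ((measure_union_le _ _).trans
        (add_le_add_left (measure_union_le _ _) _))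
      simp only [preimage_sdiff, mem_union, mem_sdiff, mem_preimage, mem_compl_iff]
      tauto
    _ ≤ 4 * volume (circleRep 1 ⁻¹' (A m)ᶜ) := by
      rw [hgood, zero_add, show (4 : ℝ≥0∞) = 3 + 1 by norm_num, add_mul, one_mul]
      gcongr
    _ < 1 := by
      rw [mul_comm, ← ENNReal.lt_div_iff_mul_lt (by simp) (by simp), one_div]
      exact hm
  exact huniv.false

/-- The points of `chaconC m` that `S` maps into `chaconC m`. -/
def visitSet (S : ChaconX → ChaconX) (m : ℕ) : Set ChaconX := chaconC m ∩ S ⁻¹' chaconC m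

section Centralizer

variable {S : ChaconX → ChaconX}

theorem visitSet_mono : Monotone (visitSet S) := fun _ _ hmn =>
  inter_subset_inter (chaconC_mono hmn) (preimage_mono (chaconC_mono hmn))

theorem measurableSet_visitSet (hSm : Measurable S) (m : ℕ) : MeasurableSet (visitSet S m) :=
  (measurableSet_chaconC m).inter (hSm (measurableSet_chaconC m))

theorem exists_mem_visitSet (x : ChaconX) : ∃ m, x ∈ visitSet S m :=
  ((eventually_mem_chaconC x).and (eventually_mem_chaconC (S x))).exists

/- `S` preserves the time needed to climb from `x` to `z`; this time exceeds `chaconH n / 2`, the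
height of `chaconC n`, so `S x` and `S z` lie in different subcolumns. -/
theorem subcolumn_lt_of_semiconj (hcomm : Function.Semiconj S chaconT chaconT) {n : ℕ}
    {x z : ChaconX} (hx : x ∈ visitSet S n) (hz : z ∈ visitSet S n) (hxz : SameColumn (n + 1) x z)
    (hlt : subcolumn n x < subcolumn n z) : subcolumn n (S x) < subcolumn n (S z) := by
  obtain ⟨k, hk, hxk⟩ := mem_chaconC_iff.1 hx.1
  obtain ⟨l, -, hzl⟩ := mem_chaconC_iff.1 hz.1
  obtain ⟨p, -, hSx⟩ := mem_chaconC_iff.1 hx.2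
  obtain ⟨q, hq, hSz⟩ := mem_chaconC_iff.1 hz.2
  have hoffset := subcolumnOffset_add_chaconH_le (n := n) hlt
  obtain ⟨d, hd⟩ : ∃ d, subcolumnOffset n (subcolumn n z) + l
      = subcolumnOffset n (subcolumn n x) + k + d := Nat.exists_eq_add_of_le (by omega)
  have hclimb : chaconT^[d] x = z := by
    simpa [hd] using hxz.iterate_chaconT_eq hxk.succ hzl.succ
  have hSclimb : chaconT^[d] (S x) = S z := by
    rw [← hclimb, hcomm.iterate_right d x]
  have hbound : subcolumnOffset n (subcolumn n (S x)) + p + d < chaconH (n + 1) := by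
    have := subcolumnOffset_add_lt (subcolumn n (S x)) hSx.1
    have := subcolumnOffset_add_lt (subcolumn n z) hzl.1
    rw [chaconH]
    omega
  have hlevel := (hSclimb ▸ hSx.succ.iterate_chaconT hbound).unique hSz.succ
  by_contra! hge
  have := subcolumnOffset_mono n hge
  omega

theorem subcolumn_apply_eq_of_semiconj (hcomm : Function.Semiconj S chaconT chaconT) {n : ℕ}
    {A : Set ChaconX} (hA : A ⊆ visitSet S n) {x : ChaconX} (hx : x ∈ A)
    (hgap : x ∉ subcolumnGap A n) : subcolumn n (S x) = subcolumn n x := by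
  have hpoint (t : Fin 3) : ∃ w ∈ A,
      SameColumn (n + 1) w x ∧ subcolumn n w = t ∧ (t = subcolumn n x → w = x) := by
    by_cases ht : t = subcolumn n x
    · exact ⟨x, hx, rfl, ht.symm, fun _ => rfl⟩
    · simp only [subcolumnGap, mem_ofPred] at hgap
      push Not at hgap
      obtain ⟨k, hk, hmem⟩ := hgap t
      have hlevel := inLevel_columnPoint (x := x) (n := n + 1) (k := subcolumnOffset n t + k)
        (by have := subcolumnOffset_add_lt t hk; rw [chaconH]; omega)
      exact ⟨_, hmem, sameColumn_columnPoint _ _ x, (hlevel.of_succ hk).2, fun h => absurd h ht⟩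
  choose w hwA hcol hsub hself using hpoint
  have hstrict : StrictMono fun t => subcolumn n (S (w t)) := fun s t hst =>
    subcolumn_lt_of_semiconj hcomm (hA (hwA s)) (hA (hwA t)) ((hcol s).trans (hcol t).symm)
      (by rwa [hsub, hsub])
  have hid := hstrict.apply_le.antisymm (hstrict.le_apply (x := subcolumn n x))
  rwa [hself _ rfl] at hid

theorem iterate_chaconT_eq_of_subcolumn_eq {m a b : ℕ} {x y : ChaconX} (hx : InLevel m a x)
    (hy : InLevel m b y) (hsub : ∀ n, m ≤ n → subcolumn n y = subcolumn n x) :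
    chaconT^[a] y = chaconT^[b] x := by
  have hlevel (n : ℕ) (hn : m ≤ n) : ∃ d, InLevel n (d + a) x ∧ InLevel n (d + b) y := by
    induction n, hn using Nat.le_induction with
    | base => exact ⟨0, by rwa [zero_add], by rwa [zero_add]⟩
    | succ n hn ih =>
      obtain ⟨d, hdx, hdy⟩ := ih
      refine ⟨subcolumnOffset n (subcolumn n x) + d, ?_, ?_⟩
      · exact add_assoc _ d a ▸ hdx.succ
      · exact add_assoc _ d b ▸ hsub n hn ▸ hdy.succ
  refine eq_of_forall_inLevel (m := m + 1) fun n hn => ?_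
  obtain ⟨n, rfl⟩ := Nat.exists_eq_add_of_le' hn
  obtain ⟨d, hdx, hdy⟩ := hlevel (n + m) (by omega)
  have hbound : subcolumnOffset (n + m) (subcolumn (n + m) x) + (d + a) + b
      < chaconH (n + m + 1) := by
    have := subcolumnOffset_add_lt (subcolumn (n + m) x) hdx.1
    have := hdy.1
    rw [chaconH]
    omega
  refine ⟨_, hdy.succ.iterate_chaconT (j := a) ?_, ?_⟩
  · rw [hsub _ (by omega)]
    omega
  · rw [hsub _ (by omega), show ∀ c, c + (d + b) + a = c + (d + a) + b by intro c; omega]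
    exact hdx.succ.iterate_chaconT hbound

theorem exists_measure_iterate_eq_ne_zero (hSm : Measurable S)
    (hcomm : Function.Semiconj S chaconT chaconT) :
    ∃ a b : ℕ, chaconMu {x | chaconT^[a] (S x) = chaconT^[b] x} ≠ 0 := by
  obtain ⟨m, hm⟩ := exists_measure_diff_iUnion_subcolumnGap_ne_zero visitSet_mono
    (measurableSet_visitSet hSm) exists_mem_visitSet
  have hsub : visitSet S m \ ⋃ r, subcolumnGap (visitSet S m) (m + r)
      ⊆ ⋃ (a : ℕ) (b : ℕ), {x | chaconT^[a] (S x) = chaconT^[b] x} := by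
    rintro x ⟨hx, hgap⟩
    obtain ⟨a, -, ha⟩ := mem_chaconC_iff.1 hx.1
    obtain ⟨b, -, hb⟩ := mem_chaconC_iff.1 hx.2
    refine mem_iUnion₂.2 ⟨a, b, iterate_chaconT_eq_of_subcolumn_eq ha hb fun n hn => ?_⟩
    refine subcolumn_apply_eq_of_semiconj hcomm (visitSet_mono hn) hx fun hxn => hgap ?_
    exact mem_iUnion.2 ⟨n - m, by rwa [Nat.add_sub_cancel' hn]⟩
  by_contra! hnull
  exact hm (measure_mono_null hsub (measure_iUnion_null fun a => measure_iUnion_null (hnull a)))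

theorem preimage_iterate_eq_of_semiconj (hcomm : Function.Semiconj S chaconT chaconT) (a b : ℕ) :
    chaconT ⁻¹' {x | chaconT^[a] (S x) = chaconT^[b] x}
      = {x | chaconT^[a] (S x) = chaconT^[b] x} := by
  ext x
  rw [mem_preimage, mem_ofPred, mem_ofPred, hcomm x, ← Function.iterate_succ_apply,
    ← Function.iterate_succ_apply, Function.iterate_succ_apply', Function.iterate_succ_apply',
    chaconT_injective.eq_iff]

end Centralizer

theorem chacon_centralizer_general (S : ChaconX → ChaconX) (hSm : Measurable S)
    (hcomm : ∀ x, S (chaconT x) = chaconT (S x)) :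
    ∃ k : ℤ, ∀ᵐ x ∂chaconMu, S x = chaconTZ k x := by
  obtain ⟨a, b, hab⟩ := exists_measure_iterate_eq_ne_zero hSm hcomm
  have hmeas : MeasurableSet {x | chaconT^[a] (S x) = chaconT^[b] x} :=
    measurableSet_eq_fun ((measurable_chaconT.iterate a).comp hSm) (measurable_chaconT.iterate b)
  have hconull : ∀ᵐ x ∂chaconMu, chaconT^[a] (S x) = chaconT^[b] x :=
    (chacon_measErgodic _ hmeas (preimage_iterate_eq_of_semiconj hcomm a b)).resolve_left hab
  exact ⟨b - a, hconull.mono fun _ => eq_chaconTZ_of_iterate_eq⟩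

/-- **Proposition (trivial centralizer).**  The centralizer of the infinite Chacon
transformation `T` is reduced to the powers of `T`: any measure-preserving
transformation `S` of `(X, μ)` commuting with `T` coincides `μ`-almost everywhere with
some power `T^k`, `k ∈ ℤ`. -/
theorem chacon_centralizer (S : ChaconX → ChaconX) (hSm : Measurable S)
    (hS : MeasurePreserving S chaconMu chaconMu)
    (hcomm : ∀ x, S (chaconT x) = chaconT (S x)) :
    ∃ k : ℤ, ∀ᵐ x ∂chaconMu, S x = chaconTZ k x :=
  chacon_centralizer_general S hSm hcomm
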